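/- arXiv:1402.5509 — 3 statements merged into one kernel-verified Lean document; each statement's English description precedes it below -/
import Mathlib

section
/- Let K be a field and n ≥ 1. Consider the polynomial ring R in the variables T_∞ and T_{ij} for 0 ≤ i < j ≤ n+2 with i ≤ n, and let L be the localization of R at the multiplicative set generated by all these variables. For 0 ≤ i < j ≤ n set f_{ij} := T_{i,n+1}·T_{j,n+2} − T_{i,n+2}·T_{j,n+1}. Then in L the ideal generated by the images of the elements T_{ij}·T_∞ − f_{ij} (for all 0 ≤ i < j ≤ n) equals the ideal generated by the images of the elements T_{ij}·T_∞ − f_{ij} (for all 0 ≤ i < j ≤ n) together with the images of all Plücker relations T_{ij}T_{kl} − T_{ik}T_{jl} + T_{il}T_{jk} for 0 ≤ i < j < k < l ≤ n+2 with k ≤ n. -/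
open MvPolynomial

/-- The index set of the polynomial ring `R` in the variables `T_∞` (the index
`none`) and `T_{ij}` for `0 ≤ i < j ≤ n+2` with `i ≤ n`. -/
abbrev IdxR (n : ℕ) : Type :=
  Option {p : ℕ × ℕ // p.1 < p.2 ∧ p.2 ≤ n + 2 ∧ p.1 ≤ n}

/-- The variable `T_∞`. -/
noncomputable def Tinf (K : Type*) [Field K] (n : ℕ) :
    MvPolynomial (IdxR n) K := X none

/-- The variable `T_{ab}` (junk value `0` for invalid index pairs). -/
noncomputable def T (K : Type*) [Field K] (n a b : ℕ) :
    MvPolynomial (IdxR n) K :=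
  if h : a < b ∧ b ≤ n + 2 ∧ a ≤ n then X (some ⟨(a, b), h⟩) else 0

/-- The function `f_{ij} = T_{i,n+1}·T_{j,n+2} − T_{i,n+2}·T_{j,n+1}`. -/
noncomputable def f (K : Type*) [Field K] (n i j : ℕ) :
    MvPolynomial (IdxR n) K :=
  T K n i (n + 1) * T K n j (n + 2) - T K n i (n + 2) * T K n j (n + 1)

/-- The multiplicative set generated by all the variables. -/
noncomputable abbrev varMonoid (K : Type*) [Field K] (n : ℕ) :
    Submonoid (MvPolynomial (IdxR n) K) :=
  Submonoid.closure (Set.range (X : IdxR n → MvPolynomial (IdxR n) K))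

/-- The Laurent polynomial ring: the localization of `R` at the multiplicative
set generated by all its variables. -/
abbrev Laurent (K : Type*) [Field K] (n : ℕ) : Type _ :=
  Localization (varMonoid K n)

/-!
Consider the `n + 3` vectors `v_i = (T_{i,n+1}, T_{i,n+2})` for `i ≤ n`, `v_{n+1} = (0, T_∞)` and
`v_{n+2} = (-T_∞, 0)` in the plane. Modulo the relations `T_{ij} T_∞ = f_{ij}`, every product
`T_{ij} T_∞` is the determinant of `v_i` and `v_j`; for `j > n` this holds identically. The
determinants satisfy the Plücker relations, so each Plücker relation in the `T_{ij}`, multiplied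
by `T_∞ ^ 2`, lies in the ideal, and `T_∞` can be cancelled as soon as it is a unit.
-/

section Plucker

variable {A ι : Type*} [CommRing A]

/-- The three-term Plücker relation among the six values of `p` on the pairs from `i, j, k, l`. -/
def pluckerRelation (p : ι → ι → A) (i j k l : ι) : A :=
  p i j * p k l - p i k * p j l + p i l * p j k

/-- The determinant of the vectors with indices `i` and `j` in the family of plane vectors
`(x a, y a)`. -/
def planeDet (x y : ι → A) (i j : ι) : A :=
  x i * y j - y i * x j

theorem pluckerRelation_planeDet (x y : ι → A) (i j k l : ι) :
    pluckerRelation (planeDet x y) i j k l = 0 := by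
  simp only [pluckerRelation, planeDet]
  ring

theorem sq_mul_pluckerRelation_mem {J : Ideal A} {p : ι → ι → A} {x y : ι → A} {t : A}
    {i j k l : ι}
    (hij : p i j * t - planeDet x y i j ∈ J) (hik : p i k * t - planeDet x y i k ∈ J)
    (hil : p i l * t - planeDet x y i l ∈ J) (hjk : p j k * t - planeDet x y j k ∈ J)
    (hjl : p j l * t - planeDet x y j l ∈ J) (hkl : p k l * t - planeDet x y k l ∈ J) :
    t ^ 2 * pluckerRelation p i j k l ∈ J := by
  rw [← Ideal.Quotient.eq] at hij hik hil hjk hjl hkl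
  rw [← Ideal.Quotient.eq_zero_iff_mem]
  let π := Ideal.Quotient.mk J
  calc π (t ^ 2 * pluckerRelation p i j k l)
      = π (p i j * t) * π (p k l * t) - π (p i k * t) * π (p j l * t)
          + π (p i l * t) * π (p j k * t) := by
        simp only [pluckerRelation, map_add, map_sub, map_mul, map_pow]
        ring
    _ = π (pluckerRelation (planeDet x y) i j k l) := by
        simp only [π, hij, hik, hil, hjk, hjl, hkl, pluckerRelation, map_add, map_sub, map_mul]
    _ = 0 := by rw [pluckerRelation_planeDet, map_zero]

end Plucker

section Variables

variable (K : Type*) [Field K] (n : ℕ)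

/-- The first coordinates of the vectors `v_0, …, v_{n+2}`. The value `0` at `n + 1` is the junk
value of `T`. -/
noncomputable def vecFst : ℕ → MvPolynomial (IdxR n) K :=
  Function.update (fun a ↦ T K n a (n + 1)) (n + 2) (-Tinf K n)

/-- The second coordinates of the vectors `v_0, …, v_{n+2}`. The value `0` at `n + 2` is the junk
value of `T`. -/
noncomputable def vecSnd : ℕ → MvPolynomial (IdxR n) K :=
  Function.update (fun a ↦ T K n a (n + 2)) (n + 1) (Tinf K n)

variable {n} {a b : ℕ}

theorem T_eq_zero_of_lt_left (ha : n < a) : T K n a b = 0 :=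
  dif_neg fun h ↦ ha.not_ge h.2.2

theorem vecFst_of_le (ha : a ≤ n) : vecFst K n a = T K n a (n + 1) :=
  Function.update_of_ne (by lia) _ _

theorem vecSnd_of_le (ha : a ≤ n) : vecSnd K n a = T K n a (n + 2) :=
  Function.update_of_ne (by lia) _ _

theorem planeDet_vec_of_le (ha : a ≤ n) (hb : b ≤ n) :
    planeDet (vecFst K n) (vecSnd K n) a b = f K n a b := by
  simp only [planeDet, f, vecFst_of_le K ha, vecFst_of_le K hb, vecSnd_of_le K ha,
    vecSnd_of_le K hb]

theorem planeDet_vec_add_one (ha : a ≤ n) :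
    planeDet (vecFst K n) (vecSnd K n) a (n + 1) = T K n a (n + 1) * Tinf K n := by
  have hFst : vecFst K n (n + 1) = 0 := by simp [vecFst, T_eq_zero_of_lt_left]
  have hSnd : vecSnd K n (n + 1) = Tinf K n := Function.update_self ..
  rw [planeDet, vecFst_of_le K ha, hFst, hSnd, mul_zero, sub_zero]

theorem planeDet_vec_add_two (ha : a ≤ n) :
    planeDet (vecFst K n) (vecSnd K n) a (n + 2) = T K n a (n + 2) * Tinf K n := by
  have hFst : vecFst K n (n + 2) = -Tinf K n := Function.update_self ..
  have hSnd : vecSnd K n (n + 2) = 0 := by simp [vecSnd, T_eq_zero_of_lt_left]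
  rw [planeDet, vecSnd_of_le K ha, hFst, hSnd, mul_zero, zero_sub, mul_neg, neg_neg]

variable {K} {J : Ideal (MvPolynomial (IdxR n) K)}

theorem T_mul_Tinf_sub_planeDet_mem
    (hJ : ∀ i j, i < j → j ≤ n → T K n i j * Tinf K n - f K n i j ∈ J)
    (hab : a < b) (hb : b ≤ n + 2) (ha : a ≤ n) :
    T K n a b * Tinf K n - planeDet (vecFst K n) (vecSnd K n) a b ∈ J := by
  obtain hbn | rfl | rfl : b ≤ n ∨ b = n + 1 ∨ b = n + 2 := by lia
  · rw [planeDet_vec_of_le K ha hbn]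
    exact hJ a b hab hbn
  · rw [planeDet_vec_add_one K ha, sub_self]
    exact J.zero_mem
  · rw [planeDet_vec_add_two K ha, sub_self]
    exact J.zero_mem

theorem Tinf_sq_mul_pluckerRelation_mem
    (hJ : ∀ i j, i < j → j ≤ n → T K n i j * Tinf K n - f K n i j ∈ J)
    {i j k l : ℕ} (hij : i < j) (hjk : j < k) (hkl : k < l) (hl : l ≤ n + 2) (hk : k ≤ n) :
    Tinf K n ^ 2 * pluckerRelation (T K n) i j k l ∈ J := by
  apply sq_mul_pluckerRelation_mem (x := vecFst K n) (y := vecSnd K n) <;>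
    exact T_mul_Tinf_sub_planeDet_mem hJ (by lia) (by lia) (by lia)

variable (K n) in
theorem isUnit_algebraMap_Tinf :
    IsUnit (algebraMap (MvPolynomial (IdxR n) K) (Laurent K n) (Tinf K n)) :=
  IsLocalization.map_units (Laurent K n)
    (⟨Tinf K n, Submonoid.subset_closure ⟨none, rfl⟩⟩ : varMonoid K n)

end Variables

theorem stmt3_general (K : Type*) [Field K] (n : ℕ)
    (B : Type*) [CommRing B] [Algebra (MvPolynomial (IdxR n) K) B]
    (hTinf : IsUnit (algebraMap (MvPolynomial (IdxR n) K) B (Tinf K n))) :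
    Ideal.span {x : B | ∃ i j : ℕ, i < j ∧ j ≤ n ∧
        x = algebraMap (MvPolynomial (IdxR n) K) B
          (T K n i j * Tinf K n - f K n i j)}
    = Ideal.span ({x : B | ∃ i j : ℕ, i < j ∧ j ≤ n ∧
        x = algebraMap (MvPolynomial (IdxR n) K) B
          (T K n i j * Tinf K n - f K n i j)}
      ∪ {x : B | ∃ i j k l : ℕ, i < j ∧ j < k ∧ k < l ∧ l ≤ n + 2 ∧ k ≤ n ∧
        x = algebraMap (MvPolynomial (IdxR n) K) B
          (T K n i j * T K n k l - T K n i k * T K n j l + T K n i l * T K n j k)}) := by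
  set I : Ideal B := Ideal.span {x : B | ∃ i j : ℕ, i < j ∧ j ≤ n ∧
    x = algebraMap (MvPolynomial (IdxR n) K) B (T K n i j * Tinf K n - f K n i j)}
  rw [Ideal.span_union, eq_comm, sup_eq_left, Ideal.span_le]
  rintro _ ⟨i, j, k, l, hij, hjk, hkl, hl, hk, rfl⟩
  have generator_mem (a b : ℕ) (hab : a < b) (hb : b ≤ n) :
      T K n a b * Tinf K n - f K n a b ∈ I.comap (algebraMap _ B) :=
    Ideal.subset_span ⟨a, b, hab, hb, rfl⟩
  have sq_mul_mem := Tinf_sq_mul_pluckerRelation_mem generator_mem hij hjk hkl hl hk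
  rw [Ideal.mem_comap, map_mul, map_pow] at sq_mul_mem
  exact (Ideal.unit_mul_mem_iff_mem I (hTinf.pow 2)).mp sq_mul_mem

/-- In the Laurent polynomial ring, the ideal generated by the images of the
elements `T_{ij}·T_∞ − f_{ij}` (`0 ≤ i < j ≤ n`) equals the ideal generated by
these elements together with the images of all Plücker relations
`T_{ij}T_{kl} − T_{ik}T_{jl} + T_{il}T_{jk}` for `0 ≤ i < j < k < l ≤ n+2`
with `k ≤ n`. -/
theorem stmt3 (K : Type*) [Field K] (n : ℕ) (hn : 1 ≤ n) :
    Ideal.span {x : Laurent K n | ∃ i j : ℕ, i < j ∧ j ≤ n ∧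
        x = algebraMap (MvPolynomial (IdxR n) K) (Laurent K n)
          (T K n i j * Tinf K n - f K n i j)}
    = Ideal.span ({x : Laurent K n | ∃ i j : ℕ, i < j ∧ j ≤ n ∧
        x = algebraMap (MvPolynomial (IdxR n) K) (Laurent K n)
          (T K n i j * Tinf K n - f K n i j)}
      ∪ {x : Laurent K n | ∃ i j k l : ℕ, i < j ∧ j < k ∧ k < l ∧ l ≤ n + 2 ∧ k ≤ n ∧
        x = algebraMap (MvPolynomial (IdxR n) K) (Laurent K n)
          (T K n i j * T K n k l - T K n i k * T K n j l + T K n i l * T K n j k)}) :=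
  stmt3_general K n (Laurent K n) (isUnit_algebraMap_Tinf K n)
end

section
/- Let K be a field and let R = K[T_∞, T_1, …, T_n] be the polynomial ring, graded by ℕ via a weight function assigning to each variable T_i a weight w_i ∈ ℕ and to T_∞ a weight w_∞ with w_∞ > 0 (weighted grading by total weighted degree). Let I ⊆ R be an ideal that is homogeneous with respect to this grading, i.e. every weighted homogeneous component of every element of I again lies in I. Suppose that T_∞ ∉ √I, that the ideal I + ⟨T_∞⟩ is prime, and that the radical √I is prime. Then I is prime. -/
open MvPolynomial

/-!
Write `J = √I` and `t = T_∞`. Primality of `I + (t)` gives `I ≤ J ≤ I + (t)`, and since `t` is a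
nonzerodivisor modulo `J`, this improves to `J = I + tJ`. Iterating, `J ≤ I + (t ^ k)` for every
`k`. As `t` has positive degree, the component of degree `i` of a multiple of `t ^ k` vanishes for
large `k`, so homogeneity of `I` forces `⋂ k, (I + (t ^ k)) = I`. Hence `J = I`.
-/

section Iteration

theorem le_sup_pow_mul_of_le_sup_mul {R : Type*} [CommSemiring R] {I J 𝔞 : Ideal R}
    (h : J ≤ I ⊔ 𝔞 * J) (k : ℕ) : J ≤ I ⊔ 𝔞 ^ k * J := by
  induction k with
  | zero => simp
  | succ k ih =>
    calc J ≤ I ⊔ 𝔞 * J := h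
      _ ≤ I ⊔ 𝔞 * (I ⊔ 𝔞 ^ k * J) := by gcongr
      _ = I ⊔ 𝔞 * I ⊔ 𝔞 ^ (k + 1) * J := by
        rw [Ideal.mul_sup, ← sup_assoc, ← mul_assoc, ← pow_succ']
      _ = I ⊔ 𝔞 ^ (k + 1) * J := by rw [sup_eq_left.2 (Ideal.mul_le_right : 𝔞 * I ≤ I)]

variable {R : Type*} [CommRing R] {I J : Ideal R} {t : R}

theorem le_sup_span_singleton_mul (hIJ : I ≤ J) (hJ : J ≤ I ⊔ Ideal.span {t})
    (ht : ∀ x, x * t ∈ J → x ∈ J) : J ≤ I ⊔ Ideal.span {t} * J := by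
  intro f hf
  obtain ⟨x, a, ha, rfl⟩ := Ideal.mem_span_singleton_sup.1 (sup_comm I _ ▸ hJ hf)
  have hx : x ∈ J := ht x ((J.add_mem_iff_left (hIJ ha)).1 hf)
  rw [add_comm, mul_comm x t]
  exact Submodule.add_mem_sup ha (Ideal.mul_mem_mul (Ideal.mem_span_singleton_self t) hx)

theorem le_sup_span_singleton_pow (hIJ : I ≤ J) (hJ : J ≤ I ⊔ Ideal.span {t})
    (ht : ∀ x, x * t ∈ J → x ∈ J) (k : ℕ) : J ≤ I ⊔ Ideal.span {t ^ k} :=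
  calc J ≤ I ⊔ Ideal.span {t} ^ k * J :=
        le_sup_pow_mul_of_le_sup_mul (le_sup_span_singleton_mul hIJ hJ ht) k
    _ ≤ I ⊔ Ideal.span {t ^ k} := by
        rw [Ideal.span_singleton_pow]
        exact sup_le_sup_left Ideal.mul_le_left I

end Iteration

section Graded

variable {ι σ A : Type*} [DecidableEq ι] [AddCommMonoid ι] [PartialOrder ι]
  [CanonicallyOrderedAdd ι] [AddLeftStrictMono ι] [Archimedean ι] [SetLike σ A]

theorem iInf_sup_span_singleton_pow_eq [CommSemiring A] [AddSubmonoidClass σ A]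
    (𝒜 : ι → σ) [GradedRing 𝒜] {I : Ideal A} (hI : I.IsHomogeneous 𝒜)
    {d : ι} (hd : 0 < d) {t : A} (ht : t ∈ 𝒜 d) :
    ⨅ k : ℕ, I ⊔ Ideal.span {t ^ k} = I := by
  refine le_antisymm (fun f hf => hI.mem_iff.2 fun i => ?_) (le_iInf fun _ => le_sup_left)
  obtain ⟨k, hk⟩ : ∃ k : ℕ, i < k • d := exists_lt_nsmul hd i
  have hfk : f ∈ Ideal.span {t ^ k} ⊔ I := sup_comm I _ ▸ Ideal.mem_iInf.1 hf k
  obtain ⟨x, a, ha, rfl⟩ := Ideal.mem_span_singleton_sup.1 hfk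
  have hx : (DirectSum.decompose 𝒜 (x * t ^ k) i : A) = 0 :=
    DirectSum.coe_decompose_mul_of_right_mem_of_not_le 𝒜 (SetLike.pow_mem_graded k ht) hk.not_ge
  rw [DirectSum.decompose_add, DirectSum.add_apply, AddMemClass.coe_add, hx, zero_add]
  exact hI i ha

theorem stmt5_general [CommRing A] [AddSubmonoidClass σ A]
    (𝒜 : ι → σ) [GradedRing 𝒜] {I : Ideal A} (hI : I.IsHomogeneous 𝒜)
    {d : ι} (hd : 0 < d) {t : A} (ht : t ∈ 𝒜 d) (htI : t ∉ I.radical)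
    (hsup : (I ⊔ Ideal.span {t}).IsRadical) (hrad : I.radical.IsPrime) : I.IsPrime := by
  have hle_sup : I.radical ≤ I ⊔ Ideal.span {t} := hsup.radical_le_iff.2 le_sup_left
  have hcancel (x : A) (hx : x * t ∈ I.radical) : x ∈ I.radical :=
    (hrad.mem_or_mem hx).resolve_right htI
  have hle : I.radical ≤ I :=
    calc I.radical ≤ ⨅ k : ℕ, I ⊔ Ideal.span {t ^ k} :=
          le_iInf (le_sup_span_singleton_pow Ideal.le_radical hle_sup hcancel)
      _ = I := iInf_sup_span_singleton_pow_eq 𝒜 hI hd ht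
  rwa [le_antisymm hle Ideal.le_radical] at hrad

end Graded

section MvPolynomial

attribute [local instance] weightedGradedAlgebra

theorem isHomogeneous_of_weightedHomogeneousComponent_mem {R M σ : Type*} [CommSemiring R]
    [AddCommMonoid M] [DecidableEq M] {w : σ → M} {I : Ideal (MvPolynomial σ R)}
    (h : ∀ p ∈ I, ∀ d : M, weightedHomogeneousComponent w d p ∈ I) :
    I.IsHomogeneous (weightedHomogeneousSubmodule R w) := fun d p hp =>
  (weightedDecomposition.decompose'_apply R w p d).symm ▸ h p hp d

/-- Let `R = K[T_∞, T_1, …, T_n]` (with `T_∞ = X none` and `T_i = X (some i)`),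
graded by `ℕ` via a weight function `w` with `w(T_∞) > 0`. If `I ⊆ R` is an
ideal that is homogeneous for the weighted grading (i.e. contains all weighted
homogeneous components of each of its elements), `T_∞ ∉ √I`, the ideal
`I + ⟨T_∞⟩` is prime and the radical `√I` is prime, then `I` is prime. -/
theorem stmt5 (K : Type*) [Field K] (n : ℕ)
    (w : Option (Fin n) → ℕ) (hw : 0 < w none)
    (I : Ideal (MvPolynomial (Option (Fin n)) K))
    (hhom : ∀ p ∈ I, ∀ d : ℕ, weightedHomogeneousComponent w d p ∈ I)
    (hrad : X none ∉ I.radical)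
    (hprime₁ : (I + Ideal.span {(X none : MvPolynomial (Option (Fin n)) K)}).IsPrime)
    (hprime₂ : I.radical.IsPrime) :
    I.IsPrime := by
  exact stmt5_general (weightedHomogeneousSubmodule K w)
    (isHomogeneous_of_weightedHomogeneousComponent_mem hhom) hw
    (isWeightedHomogeneous_X K w none) hrad hprime₁.isRadical hprime₂

end MvPolynomial
end

section
/- Let K be an algebraically closed field and n ≥ 2. Identify the polynomial ring K[S_{i,n+1}, S_{i,n+2} : 1 ≤ i ≤ n] with the ring of polynomial functions on (K²)ⁿ, where the i-th factor K² has coordinates (S_{i,n+1}, S_{i,n+2}). Let V ⊆ (K²)ⁿ be the set of tuples (x_1, …, x_n) such that every x_i is nonzero and any two x_i, x_j are linearly dependent over K. Then the vanishing ideal I(V) ⊆ K[S_{i,n+1}, S_{i,n+2} : 1 ≤ i ≤ n] equals the ideal generated by the 2×2 minors S_{i,n+1}S_{j,n+2} − S_{i,n+2}S_{j,n+1} for 1 ≤ i < j ≤ n, and this ideal is prime. -/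
open MvPolynomial

/-- The index set of the polynomial ring `K[S_{i,n+1}, S_{i,n+2} : 1 ≤ i ≤ n]`:
the pair `(i, 0)` stands for `S_{i,n+1}` and `(i, 1)` for `S_{i,n+2}`. A point
`v : Fin n × Fin 2 → K` of `(K²)ⁿ` has `i`-th component
`x_i = (v (i,0), v (i,1)) ∈ K²`. -/
abbrev Idx (n : ℕ) : Type := Fin n × Fin 2

/-- The `i`-th component `x_i ∈ K²` (as a vector `Fin 2 → K`) of a point `v` of
`(K²)ⁿ`. -/
def col {K : Type*} {n : ℕ} (v : Idx n → K) (i : Fin n) : Fin 2 → K :=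
  fun b => v (i, b)

/-- The set `V ⊆ (K²)ⁿ` of tuples `(x_1, …, x_n)` such that every `x_i` is
nonzero and any two `x_i, x_j` are linearly dependent over `K`. -/
def V (K : Type*) [Field K] (n : ℕ) : Set (Idx n → K) :=
  {v | (∀ i : Fin n, col v i ≠ 0) ∧
    ∀ i j : Fin n, ¬ LinearIndependent K ![col v i, col v j]}

/-- The ideal generated by the `2×2` minors
`S_{i,n+1}S_{j,n+2} − S_{i,n+2}S_{j,n+1}`, `1 ≤ i < j ≤ n`, of the `2×n` matrix
whose columns are the `(S_{i,n+1}, S_{i,n+2})ᵗ`. -/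
noncomputable def minorsIdeal (K : Type*) [Field K] (n : ℕ) :
    Ideal (MvPolynomial (Idx n) K) :=
  Ideal.span {x | ∃ i j : Fin n, i < j ∧
    x = X (i, 0) * X (j, 1) - X (i, 1) * X (j, 0)}

/-!
The parametrisation `S_{i,b} ↦ s_i t_b` of rank-one matrices has the ideal of `2×2` minors as its
kernel. Indeed it sends monomials to monomials, and two monomials with the same image have the same
row indices and the same column indices, with multiplicity, so that they are related by exchanges
`S_{i,b} S_{j,c} ↔ S_{i,c} S_{j,b}`, which are trivial modulo the minors. The minors thus generate a
prime ideal. A polynomial vanishing on `V` pulls back to a polynomial in the `s_i` and `t_b` that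
vanishes wherever all coordinates are nonzero, and so is zero when `K` is infinite.
-/

section Exchange

variable {α β M : Type*} [CommMonoid M] {x : α × β → M}

theorem exists_prod_map_eq_mul_of_exchange
    (exchange : ∀ i j b c, x (i, b) * x (j, c) = x (i, c) * x (j, b))
    {t : Multiset (α × β)} {i : α} {b : β} (hi : i ∈ t.map Prod.fst) (hb : b ∈ t.map Prod.snd) :
    ∃ t' : Multiset (α × β), t.map Prod.fst = i ::ₘ t'.map Prod.fst ∧
      t.map Prod.snd = b ::ₘ t'.map Prod.snd ∧ (t.map x).prod = x (i, b) * (t'.map x).prod := by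
  obtain ⟨⟨_, c⟩, hic, rfl⟩ := Multiset.mem_map.1 hi
  obtain ⟨⟨j, _⟩, hjb, rfl⟩ := Multiset.mem_map.1 hb
  obtain ⟨u, rfl⟩ := Multiset.exists_cons_of_mem hic
  rcases Multiset.mem_cons.1 hjb with heq | hjb
  · obtain ⟨rfl, rfl⟩ := Prod.mk.inj heq
    exact ⟨u, by simp⟩
  · obtain ⟨u, rfl⟩ := Multiset.exists_cons_of_mem hjb
    refine ⟨(j, c) ::ₘ u, by simp, by simp [Multiset.cons_swap], ?_⟩
    simp only [Multiset.map_cons, Multiset.prod_cons, ← mul_assoc, exchange]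

theorem prod_map_eq_of_exchange
    (exchange : ∀ i j b c, x (i, b) * x (j, c) = x (i, c) * x (j, b)) {s t : Multiset (α × β)}
    (hfst : s.map Prod.fst = t.map Prod.fst) (hsnd : s.map Prod.snd = t.map Prod.snd) :
    (s.map x).prod = (t.map x).prod := by
  induction s using Multiset.induction generalizing t with
  | empty => simp [Multiset.map_eq_zero.1 hfst.symm]
  | cons p s ih =>
    obtain ⟨u, hufst, husnd, hprod⟩ := exists_prod_map_eq_mul_of_exchange exchange
      (t := t) (i := p.1) (b := p.2) (by simp [← hfst]) (by simp [← hsnd])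
    rw [Multiset.map_cons, hufst, Multiset.cons_inj_right] at hfst
    rw [Multiset.map_cons, husnd, Multiset.cons_inj_right] at hsnd
    rw [Multiset.map_cons, Multiset.prod_cons, ih hfst hsnd, hprod]

end Exchange

theorem ker_le_ker_of_map_basis {R M N P ι κ : Type*} [CommSemiring R] [AddCommMonoid M]
    [AddCommMonoid N] [AddCommMonoid P] [Module R M] [Module R N] [Module R P]
    (b : Module.Basis ι R M) (b' : Module.Basis κ R N) {f : M →ₗ[R] N} {g : M →ₗ[R] P} {e : ι → κ}
    (hf : ∀ i, f (b i) = b' (e i)) (hg : (g ∘ b).FactorsThrough e) :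
    LinearMap.ker f ≤ LinearMap.ker g := by
  let h : N →ₗ[R] P := b'.constr R (Function.extend e (g ∘ b) 0)
  have hcomp : h ∘ₗ f = g := b.ext fun i ↦ by
    rw [LinearMap.comp_apply, hf, Module.Basis.constr_basis, hg.extend_apply, Function.comp_apply]
  exact hcomp ▸ LinearMap.ker_le_ker_comp f h

theorem map_monomial_one_eq_prod_toMultiset {R A σ : Type*} [CommSemiring R] [CommSemiring A]
    (f : MvPolynomial σ R →+* A) (m : σ →₀ ℕ) :
    f (monomial m 1) = (m.toMultiset.map fun k ↦ f (X k)).prod := by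
  rw [Finsupp.toMultiset_map, Finsupp.prod_toMultiset,
    Finsupp.prod_mapDomain_index pow_zero pow_add, monomial_eq, C_1, one_mul, map_finsuppProd]
  simp only [map_pow]

theorem eq_zero_of_eval_eq_zero_of_forall_ne_zero {R σ : Type*} [CommRing R] [IsDomain R]
    [Infinite R] {p : MvPolynomial σ R} (h : ∀ w : σ → R, (∀ k, w k ≠ 0) → eval w p = 0) : p = 0 :=
  funext_set (fun _ ↦ {0}ᶜ) (fun _ ↦ (Set.finite_singleton 0).infinite_compl)
    fun w hw ↦ by simpa using h w fun k ↦ hw k trivial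

section Segre

variable (R α β : Type*) [CommSemiring R]

/-- The algebra map `S_{i,b} ↦ s_i t_b` dual to the affine Segre map, where the variables `s_i` are
indexed by `Sum.inl` and the `t_b` by `Sum.inr`. -/
noncomputable def segreHom : MvPolynomial (α × β) R →ₐ[R] MvPolynomial (α ⊕ β) R :=
  aeval fun q ↦ X (Sum.inl q.1) * X (Sum.inr q.2)

variable {R α β}

/-- The affine Segre map, sending `(s, t)` to the rank-one matrix `(s_i t_b)`. -/
def segrePoint (w : α ⊕ β → R) : α × β → R :=
  fun q ↦ w (Sum.inl q.1) * w (Sum.inr q.2)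

/-- The exponent of the image of the monomial `S^m` under `segreHom`: the row sums and the column
sums of the matrix `m`. -/
noncomputable def segreExponent (m : α × β →₀ ℕ) : α ⊕ β →₀ ℕ :=
  (m.mapDomain Prod.fst).sumElim (m.mapDomain Prod.snd)

theorem segreExponent_eq_iff {m m' : α × β →₀ ℕ} :
    segreExponent m = segreExponent m' ↔
      m.mapDomain Prod.fst = m'.mapDomain Prod.fst ∧
        m.mapDomain Prod.snd = m'.mapDomain Prod.snd :=
  Finsupp.sumFinsuppEquivProdFinsupp.symm.injective.eq_iff.trans Prod.mk_inj

theorem segreHom_monomial (m : α × β →₀ ℕ) (r : R) :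
    segreHom R α β (monomial m r) = monomial (segreExponent m) r := by
  have rename_monomials : monomial (segreExponent m) r =
      C r * (rename Sum.inl (rename Prod.fst (monomial m (1 : R))) *
        rename Sum.inr (rename Prod.snd (monomial m (1 : R)))) := by
    simp only [rename_monomial, monomial_mul, C_mul_monomial, mul_one, segreExponent,
      Finsupp.sumElim_eq_add]
  rw [rename_monomials, segreHom, aeval_monomial, algebraMap_eq]
  simp only [mul_pow, Finset.prod_mul_distrib, monomial_eq, C_1, one_mul, Finsupp.prod, map_prod,
    map_pow, rename_X]

theorem eval_segreHom (w : α ⊕ β → R) (p : MvPolynomial (α × β) R) :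
    eval w (segreHom R α β p) = eval (segrePoint w) p := by
  rw [← coe_aeval_eq_eval, ← coe_aeval_eq_eval, RingHom.coe_coe, RingHom.coe_coe, segreHom,
    comp_aeval_apply]
  simp only [map_mul, aeval_X]
  rfl

end Segre

section GenericMinors

variable (R α β : Type*) [CommRing R]

/-- The ideal generated by all `2×2` minors of the generic matrix with rows indexed by `α` and
columns by `β`. No order on the indices is used: every minor occurs with both signs, together with
the zero minors of repeated rows or columns. -/
noncomputable def genericMinorsIdeal : Ideal (MvPolynomial (α × β) R) :=
  Ideal.span {p | ∃ i j b c, p = X (i, b) * X (j, c) - X (i, c) * X (j, b)}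

variable {R α β}

theorem mk_monomial_eq_of_segreExponent_eq {m m' : α × β →₀ ℕ}
    (h : segreExponent m = segreExponent m') :
    Ideal.Quotient.mk (genericMinorsIdeal R α β) (monomial m 1) =
      Ideal.Quotient.mk (genericMinorsIdeal R α β) (monomial m' 1) := by
  obtain ⟨hfst, hsnd⟩ := segreExponent_eq_iff.1 h
  rw [map_monomial_one_eq_prod_toMultiset, map_monomial_one_eq_prod_toMultiset]
  refine prod_map_eq_of_exchange (fun i j b c ↦ ?_) ?_ ?_
  · rw [← map_mul, ← map_mul, Ideal.Quotient.eq]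
    exact Ideal.subset_span ⟨i, j, b, c, rfl⟩
  · rw [Finsupp.toMultiset_map, Finsupp.toMultiset_map, hfst]
  · rw [Finsupp.toMultiset_map, Finsupp.toMultiset_map, hsnd]

theorem genericMinorsIdeal_le_ker_segreHom :
    genericMinorsIdeal R α β ≤ RingHom.ker (segreHom R α β) := by
  refine Ideal.span_le.2 ?_
  rintro _ ⟨i, j, b, c, rfl⟩
  simp only [SetLike.mem_coe, RingHom.mem_ker, segreHom, map_sub, map_mul, aeval_X]
  ring

theorem ker_segreHom : RingHom.ker (segreHom R α β) = genericMinorsIdeal R α β := by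
  refine le_antisymm (fun p hp ↦ ?_) genericMinorsIdeal_le_ker_segreHom
  have hker := ker_le_ker_of_map_basis (basisMonomials (α × β) R) (basisMonomials (α ⊕ β) R)
    (e := segreExponent) (f := (segreHom R α β).toLinearMap)
    (g := (Ideal.Quotient.mkₐ R (genericMinorsIdeal R α β)).toLinearMap)
    (fun m ↦ by simp [segreHom_monomial])
    (fun m m' h ↦ by simpa using mk_monomial_eq_of_segreExponent_eq h)
  exact Ideal.Quotient.eq_zero_iff_mem.1 (hker hp)

theorem isPrime_genericMinorsIdeal [IsDomain R] : (genericMinorsIdeal R α β).IsPrime :=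
  ker_segreHom (R := R) (α := α) (β := β) ▸ RingHom.ker_isPrime _

theorem mem_genericMinorsIdeal_of_eval_segrePoint [IsDomain R] [Infinite R]
    {p : MvPolynomial (α × β) R}
    (h : ∀ w : α ⊕ β → R, (∀ k, w k ≠ 0) → eval (segrePoint w) p = 0) :
    p ∈ genericMinorsIdeal R α β := by
  rw [← ker_segreHom, RingHom.mem_ker]
  exact eq_zero_of_eval_eq_zero_of_forall_ne_zero fun w hw ↦ (eval_segreHom w p).trans (h w hw)

end GenericMinors

theorem linearIndependent_pair_fin_two_iff {K : Type*} [Field K] (u v : Fin 2 → K) :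
    LinearIndependent K ![u, v] ↔ u 0 * v 1 - u 1 * v 0 ≠ 0 := by
  have h := Matrix.linearIndependent_rows_iff_isUnit (A := Matrix.of ![u, v])
  rw [Matrix.isUnit_iff_isUnit_det, Matrix.det_fin_two, isUnit_iff_ne_zero] at h
  exact h

section TwoColumns

variable {K : Type*} [Field K] {n : ℕ}

theorem mem_V_iff {v : Idx n → K} :
    v ∈ V K n ↔ (∀ i, col v i ≠ 0) ∧ ∀ i j, v (i, 0) * v (j, 1) - v (i, 1) * v (j, 0) = 0 := by
  simp only [V, Set.mem_ofPred_eq, linearIndependent_pair_fin_two_iff, not_not, col]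

theorem segrePoint_mem_V {w : Fin n ⊕ Fin 2 → K} (hw : ∀ k, w k ≠ 0) : segrePoint w ∈ V K n := by
  refine mem_V_iff.2 ⟨fun i hi ↦ ?_, fun i j ↦ ?_⟩
  · exact mul_ne_zero (hw _) (hw _) (congrFun hi 0)
  · simp only [segrePoint]
    ring

theorem minor_mem_minorsIdeal (i j : Fin n) :
    X (i, 0) * X (j, 1) - X (i, 1) * X (j, 0) ∈ minorsIdeal K n := by
  rcases lt_trichotomy i j with hij | rfl | hji
  · exact Ideal.subset_span ⟨i, j, hij, rfl⟩
  · simp [mul_comm]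
  · rw [← neg_mem_iff]
    exact Ideal.subset_span ⟨j, i, hji, by ring⟩

theorem minorsIdeal_eq_genericMinorsIdeal :
    minorsIdeal K n = genericMinorsIdeal K (Fin n) (Fin 2) := by
  refine le_antisymm (Ideal.span_mono ?_) (Ideal.span_le.2 ?_)
  · rintro _ ⟨i, j, -, rfl⟩
    exact ⟨i, j, 0, 1, rfl⟩
  · rintro _ ⟨i, j, b, c, rfl⟩
    fin_cases b <;> fin_cases c
    · simp
    · exact minor_mem_minorsIdeal i j
    · simpa [mul_comm] using minor_mem_minorsIdeal (K := K) j i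
    · simp

theorem eval_eq_zero_of_mem_minorsIdeal {p : MvPolynomial (Idx n) K} (hp : p ∈ minorsIdeal K n)
    {v : Idx n → K} (hv : v ∈ V K n) : eval v p = 0 := by
  suffices h : minorsIdeal K n ≤ RingHom.ker (eval v) from h hp
  refine Ideal.span_le.2 ?_
  rintro _ ⟨i, j, -, rfl⟩
  simpa using (mem_V_iff.1 hv).2 i j

end TwoColumns

theorem stmt12_general (K : Type*) [Field K] [Infinite K] (n : ℕ) :
    {p : MvPolynomial (Idx n) K | ∀ v ∈ V K n, eval v p = 0}
      = ↑(minorsIdeal K n) ∧ (minorsIdeal K n).IsPrime := by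
  refine ⟨Set.Subset.antisymm (fun p hp ↦ ?_) fun p hp v hv ↦ ?_, ?_⟩
  · rw [minorsIdeal_eq_genericMinorsIdeal]
    exact mem_genericMinorsIdeal_of_eval_segrePoint fun w hw ↦ hp _ (segrePoint_mem_V hw)
  · exact eval_eq_zero_of_mem_minorsIdeal hp hv
  · rw [minorsIdeal_eq_genericMinorsIdeal]
    exact isPrime_genericMinorsIdeal

/-- The vanishing ideal of `V` equals the ideal generated by the `2×2` minors
`S_{i,n+1}S_{j,n+2} − S_{i,n+2}S_{j,n+1}` (`1 ≤ i < j ≤ n`), and this ideal is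
prime. -/
theorem stmt12 (K : Type*) [Field K] [IsAlgClosed K] (n : ℕ) (hn : 2 ≤ n) :
    {p : MvPolynomial (Idx n) K | ∀ v ∈ V K n, eval v p = 0}
      = ↑(minorsIdeal K n) ∧ (minorsIdeal K n).IsPrime := by
  exact stmt12_general K n
end
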